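/- Let A be a Noetherian ring satisfying Serre's condition (S₁). Then A is strictly closed in Ā if and only if A_P is strictly closed in the integral closure of A_P in Q(A_P) for every P ∈ X₁(A). -/

import Mathlib

open scoped TensorProduct

set_option synthInstance.maxHeartbeats 1000000 in
set_option maxHeartbeats 2000000 in
/-- The strict closure `A*` of `A` in the integral closure `Ā` of `A` in its total ring
of fractions `Q(A)`: the set of `x ∈ Ā` such that `x ⊗ 1 = 1 ⊗ x` in `Ā ⊗_A Ā`. -/
def strictClosureSet (A : Type*) [CommRing A] : Set (FractionRing A) :=
  {x | ∃ hx : x ∈ integralClosure A (FractionRing A),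
    ((⟨x, hx⟩ : integralClosure A (FractionRing A)) ⊗ₜ[A]
        (1 : integralClosure A (FractionRing A)) :
      TensorProduct A (integralClosure A (FractionRing A))
        (integralClosure A (FractionRing A))) =
    (1 : integralClosure A (FractionRing A)) ⊗ₜ[A]
        (⟨x, hx⟩ : integralClosure A (FractionRing A))}

/-- `A` is strictly closed in `Ā`, i.e. `A = A*`. -/
def IsStrictlyClosed (A : Type*) [CommRing A] : Prop :=
  ∀ x ∈ strictClosureSet A, ∃ a : A, algebraMap A (FractionRing A) a = x

/-- `xs` is a regular sequence on `R`: for each `i`, the element `xs i` acts injectively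
on `R / (xs 0, …, xs (i-1))`. -/
def IsRegularSeq (R : Type*) [CommRing R] (xs : List R) : Prop :=
  ∀ (i : ℕ) (h : i < xs.length),
    IsSMulRegular (R ⧸ Ideal.span {y : R | y ∈ xs.take i}) (xs.get ⟨i, h⟩)

/-- For a Noetherian local ring `R`, `depth R ≥ n` holds iff there is a regular sequence
of length `n` consisting of elements of the maximal ideal. -/
def RingDepthGE (R : Type*) [CommRing R] [IsLocalRing R] (n : ℕ) : Prop :=
  ∃ xs : List R, xs.length = n ∧ (∀ x ∈ xs, x ∈ IsLocalRing.maximalIdeal R) ∧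
    IsRegularSeq R xs

/-- Serre's condition `(S_n)`: `depth A_P ≥ min (n, dim A_P)` for every prime ideal `P`
of `A`. -/
def SerreSCondition (A : Type*) [CommRing A] (n : ℕ) : Prop :=
  ∀ (P : Ideal A) [P.IsPrime], ∀ k : ℕ, k ≤ n →
    (k : WithBot (WithTop ℕ)) ≤ ringKrullDim (Localization.AtPrime P) →
    RingDepthGE (Localization.AtPrime P) k

/-!
Strict closedness of `A` says that `A → Ā ⇉ Ā ⊗_A Ā` is exact. Exactness is preserved by flat base
change and integral closure commutes with localization, so it passes from `A` to every localization
`A'` as soon as `A' ⊗_A Q(A)` is the total ring of fractions of `A'`. Under `(S₁)` every associated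
prime of `A` is minimal, hence `Q(A)` and `A' ⊗_A Q(A)` are Artinian; there non-zerodivisors are
units, which gives `A' ⊗_A Q(A) = Q(A')`.

Conversely, for a non-zerodivisor `s`, membership `b ∈ sA` can be tested at the associated primes of
`A / sA`, and these lie in `X₁(A)`. Thus `b / s ∈ Q(A)` lies in `A` as soon as its image in `Q(A_P)`
lies in `A_P` for all `P ∈ X₁(A)`, and images of elements of `A*` do lie in `(A_P)* = A_P`.
-/

section Effective

open Algebra (IsEffective)
open Algebra.TensorProduct (includeLeftSubRight includeLeftSubRight_apply
  includeLeftSubRight_zero_of_mem_range distribBaseChange_includeLeftSubRight_apply)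

theorem includeLeftSubRight_map_eq_zero {A A' B B' : Type*} [CommSemiring A]
    [CommSemiring A'] [Ring B] [Ring B'] [Algebra A A'] [Algebra A B] [Algebra A B'] [Algebra A' B']
    [IsScalarTower A A' B'] (g : B →ₐ[A] B') {x : B} (hx : includeLeftSubRight A B x = 0) :
    includeLeftSubRight A' B' (g x) = 0 := by
  have h := congr(TensorProduct.mapOfCompatibleSMul A' A A' B' B'
    (TensorProduct.map g.toLinearMap g.toLinearMap $hx))
  simpa only [includeLeftSubRight_apply, map_sub, TensorProduct.map_tmul,
    TensorProduct.mapOfCompatibleSMul_tmul, AlgHom.toLinearMap_apply, map_one, map_zero] using h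

theorem isEffective_of_algEquiv {R S S' : Type*} [CommSemiring R] [Ring S] [Ring S']
    [Algebra R S] [Algebra R S'] (e : S ≃ₐ[R] S') (h : IsEffective R S) : IsEffective R S' := by
  refine fun y ↦ ⟨fun hy ↦ ?_, includeLeftSubRight_zero_of_mem_range⟩
  obtain ⟨r, hr⟩ := (h _).mp (includeLeftSubRight_map_eq_zero (A' := R) e.symm.toAlgHom hy)
  exact ⟨r, by simpa using congr(e $hr)⟩

theorem isEffective_tensorProduct_of_flat {R S : Type*} (T : Type*) [CommRing R] [Ring S]
    [CommRing T] [Algebra R S] [Algebra R T] [Module.Flat R T] (h : IsEffective R S) :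
    IsEffective T (T ⊗[R] S) := by
  refine fun y ↦ ⟨fun hy ↦ ?_, includeLeftSubRight_zero_of_mem_range⟩
  rw [← distribBaseChange_includeLeftSubRight_apply, LinearEquiv.map_eq_zero_iff] at hy
  obtain ⟨z, rfl⟩ := (Module.Flat.lTensor_exact T h y).mp hy
  obtain ⟨t, rfl⟩ := (TensorProduct.rid R T).symm.surjective z
  exact ⟨t, by simp⟩

theorem isStrictlyClosed_iff_isEffective_fractionRing (A : Type*) [CommRing A] :
    IsStrictlyClosed A ↔ IsEffective A (integralClosure A (FractionRing A)) := by
  constructor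
  · intro h x
    refine ⟨fun hx ↦ ?_, includeLeftSubRight_zero_of_mem_range⟩
    obtain ⟨a, ha⟩ := h x ⟨x.2, sub_eq_zero.mp hx⟩
    exact ⟨a, Subtype.ext ha⟩
  · rintro h x ⟨hx, hx'⟩
    obtain ⟨a, ha⟩ := (h ⟨x, hx⟩).mp (sub_eq_zero.mpr hx')
    exact ⟨a, congr_arg Subtype.val ha⟩

theorem isStrictlyClosed_iff_isEffective (A K : Type*) [CommRing A] [CommRing K] [Algebra A K]
    [IsFractionRing A K] :
    IsStrictlyClosed A ↔ IsEffective A (integralClosure A K) := by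
  let e := (FractionRing.algEquiv A K).mapIntegralClosure
  rw [isStrictlyClosed_iff_isEffective_fractionRing]
  exact ⟨isEffective_of_algEquiv e, isEffective_of_algEquiv e.symm⟩

end Effective

section Localization

open nonZeroDivisors

theorem isFractionRing_tensorProduct {A : Type*} (A' K : Type*) [CommRing A] [CommRing A']
    [CommRing K] [Algebra A A'] [Algebra A K] (M : Submonoid A) [IsLocalization M A']
    [IsFractionRing A K] [IsArtinianRing K] : IsFractionRing A' (A' ⊗[A] K) := by
  let : Algebra K (A' ⊗[A] K) := Algebra.TensorProduct.rightAlgebra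
  have : IsArtinianRing (A' ⊗[A] K) :=
    IsArtinianRing.localization_artinian (Algebra.algebraMapSubmonoid K M) _
  have : IsLocalization (Algebra.algebraMapSubmonoid A' A⁰) (A' ⊗[A] K) := inferInstance
  refine IsLocalization.of_le (Algebra.algebraMapSubmonoid A' A⁰) _
    (IsLocalization.map_nonZeroDivisors_le M A') fun r hr ↦ ?_
  have hr' : algebraMap A' (A' ⊗[A] K) r ∈ (A' ⊗[A] K)⁰ :=
    IsLocalization.map_nonZeroDivisors_le (Algebra.algebraMapSubmonoid A' A⁰) _ ⟨r, hr, rfl⟩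
  exact IsArtinianRing.isUnit_of_mem_nonZeroDivisors hr'

theorem IsStrictlyClosed.of_isLocalization {A : Type*} (A' K : Type*) [CommRing A] [CommRing A']
    [CommRing K] [Algebra A A'] [Algebra A K] [IsFractionRing A K] [IsArtinianRing K]
    (M : Submonoid A) [IsLocalization M A'] (h : IsStrictlyClosed A) : IsStrictlyClosed A' := by
  have := IsLocalization.flat A' M
  have := isFractionRing_tensorProduct A' K M
  rw [isStrictlyClosed_iff_isEffective A' (A' ⊗[A] K)]
  exact isEffective_of_algEquiv
    (.ofBijective (TensorProduct.toIntegralClosure A A' K)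
      (TensorProduct.toIntegralClosure_bijective_of_isLocalization M))
    (isEffective_tensorProduct_of_flat A' ((isStrictlyClosed_iff_isEffective A K).mp h))

end Localization

section Depth

open IsLocalRing nonZeroDivisors

variable {R : Type*} [CommRing R]

theorem dvd_of_dvd_mul_of_isSMulRegular {s y₁ y₂ z : R} (hs : s ∈ R⁰) (hy₁ : IsSMulRegular R y₁)
    (hy₂ : IsSMulRegular (R ⧸ Ideal.span {y₁}) y₂) (h₁ : s ∣ y₁ * z) (h₂ : s ∣ y₂ * z) :
    s ∣ z := by
  obtain ⟨w, hw⟩ := h₁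
  obtain ⟨v, hv⟩ := h₂
  have hwv : y₂ * w = y₁ * v := by
    rw [← sub_eq_zero]
    exact (mul_left_mem_nonZeroDivisors_eq_zero_iff hs).mp
      (by linear_combination y₁ * hv - y₂ * hw)
  have hw_mem : w ∈ Ideal.span {y₁} :=
    mem_of_isSMulRegular_quotient_of_smul_mem hy₂ (Ideal.mem_span_singleton.mpr ⟨v, hwv⟩)
  obtain ⟨t, rfl⟩ := Ideal.mem_span_singleton.mp hw_mem
  exact ⟨t, hy₁ (by simp only [smul_eq_mul]; linear_combination hw)⟩

theorem IsRegularSeq.isSMulRegular_head {y : R} {xs : List R} (h : IsRegularSeq R (y :: xs)) :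
    IsSMulRegular R y := by
  have hbot : Ideal.span {z : R | z ∈ (y :: xs).take 0} = ⊥ := by simp
  exact ((Submodule.quotEquivOfEqBot _ hbot).isSMulRegular_congr y).mp (h 0 (by simp))

variable [IsLocalRing R]

theorem RingDepthGE.exists_isSMulRegular (h : RingDepthGE R 1) :
    ∃ y ∈ maximalIdeal R, IsSMulRegular R y := by
  obtain ⟨xs, hlen, hmem, hreg⟩ := h
  obtain ⟨y, rfl⟩ := List.length_eq_one_iff.mp hlen
  exact ⟨y, hmem y (by simp), hreg.isSMulRegular_head⟩

theorem RingDepthGE.exists_isSMulRegular_isSMulRegular_quotient (h : RingDepthGE R 2) :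
    ∃ y₁ ∈ maximalIdeal R, ∃ y₂ ∈ maximalIdeal R,
      IsSMulRegular R y₁ ∧ IsSMulRegular (R ⧸ Ideal.span {y₁}) y₂ := by
  obtain ⟨xs, hlen, hmem, hreg⟩ := h
  obtain ⟨y₁, y₂, rfl⟩ := List.length_eq_two.mp hlen
  have hspan : {y | y ∈ [y₁]} = {y₁} := by ext; simp
  exact ⟨y₁, hmem _ (by simp), y₂, hmem _ (by simp), hreg.isSMulRegular_head,
    hspan ▸ hreg 1 Nat.one_lt_two⟩

theorem RingDepthGE.maximalIdeal_notMem_associatedPrimes [IsNoetherianRing R]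
    (h : RingDepthGE R 1) : maximalIdeal R ∉ associatedPrimes R R := by
  obtain ⟨y, hy, hreg⟩ := h.exists_isSMulRegular
  intro hm
  have : y ∈ ⋃ p ∈ associatedPrimes R R, (p : Set R) := Set.mem_biUnion hm hy
  rw [biUnion_associatedPrimes_eq_compl_regular] at this
  exact this hreg

theorem RingDepthGE.maximalIdeal_notMem_associatedPrimes_quotient [IsNoetherianRing R]
    (h : RingDepthGE R 2) {s : R} (hs : s ∈ R⁰) :
    maximalIdeal R ∉ associatedPrimes R (R ⧸ Ideal.span {s}) := by
  obtain ⟨y₁, hm₁, y₂, hm₂, hy₁, hy₂⟩ := h.exists_isSMulRegular_isSMulRegular_quotient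
  intro hm
  obtain ⟨hprime, z, hz⟩ := isAssociatedPrime_iff.mp hm
  obtain ⟨z, rfl⟩ := Ideal.Quotient.mk_surjective z
  have mem_iff (y : R) : y ∈ maximalIdeal R ↔ s ∣ y * z := by
    rw [hz, Submodule.mem_colon_singleton, Submodule.mem_bot, ← Ideal.mem_span_singleton,
      ← Ideal.Quotient.eq_zero_iff_mem]
    rfl
  refine hprime.ne_top ((Ideal.eq_top_iff_one _).mpr ((mem_iff 1).mpr ?_))
  rw [one_mul]
  exact dvd_of_dvd_mul_of_isSMulRegular hs hy₁ hy₂ ((mem_iff y₁).mp hm₁) ((mem_iff y₂).mp hm₂)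

end Depth

section AssociatedPrimes

open IsLocalRing nonZeroDivisors Module.associatedPrimes

variable {A : Type*} [CommRing A]

theorem maximalIdeal_mem_associatedPrimes_of_isLocalizedModule {M N : Type*} [AddCommGroup M]
    [Module A M] [AddCommGroup N] [Module A N] {P : Ideal A} [P.IsPrime]
    [Module (Localization.AtPrime P) N] [IsScalarTower A (Localization.AtPrime P) N]
    (f : M →ₗ[A] N) [IsLocalizedModule P.primeCompl f] (hP : P ∈ associatedPrimes A M) :
    maximalIdeal (Localization.AtPrime P) ∈ associatedPrimes (Localization.AtPrime P) N :=
  mem_associatedPrimes_of_comap_mem_associatedPrimes_of_isLocalizedModule P.primeCompl f _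
    (by rwa [← Ideal.under_def, Localization.AtPrime.under_maximalIdeal])

theorem maximalIdeal_mem_associatedPrimes_quotient_map {P : Ideal A} [P.IsPrime] {I : Ideal A}
    (hP : P ∈ associatedPrimes A (A ⧸ I)) :
    maximalIdeal (Localization.AtPrime P) ∈ associatedPrimes (Localization.AtPrime P)
      (Localization.AtPrime P ⧸ I.map (algebraMap A (Localization.AtPrime P))) := by
  rw [← Ideal.localized'_eq_map _ P.primeCompl]
  exact maximalIdeal_mem_associatedPrimes_of_isLocalizedModule
    (I.toLocalizedQuotient' (Localization.AtPrime P) P.primeCompl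
      (Algebra.linearMap A (Localization.AtPrime P))) hP

variable [IsNoetherianRing A]

theorem not_ringDepthGE_two_of_mem_associatedPrimes_quotient {P : Ideal A} [P.IsPrime] {s : A}
    (hs : s ∈ A⁰) (hP : P ∈ associatedPrimes A (A ⧸ Ideal.span {s})) :
    ¬ RingDepthGE (Localization.AtPrime P) 2 := by
  intro h
  have hm := maximalIdeal_mem_associatedPrimes_quotient_map hP
  rw [Ideal.map_span, Set.image_singleton] at hm
  exact h.maximalIdeal_notMem_associatedPrimes_quotient
    (IsLocalization.map_nonZeroDivisors_le P.primeCompl _ ⟨s, hs, rfl⟩) hm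

theorem SerreSCondition.associatedPrimes_subset_minimalPrimes (h : SerreSCondition A 1) :
    associatedPrimes A A ⊆ minimalPrimes A := by
  intro P hP
  have : P.IsPrime := hP.isPrime
  rw [← Ideal.height_eq_zero_iff]
  by_contra hne
  refine (h P 1 le_rfl ?_).maximalIdeal_notMem_associatedPrimes
    (maximalIdeal_mem_associatedPrimes_of_isLocalizedModule
      (Algebra.linearMap A (Localization.AtPrime P)) hP)
  rw [IsLocalization.AtPrime.ringKrullDim_eq_height P]
  exact WithBot.coe_le_coe.mpr ((Order.one_le_iff_ne_zero (α := ℕ∞)).mpr hne)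

theorem isArtinianRing_of_associatedPrimes_subset_minimalPrimes (K : Type*) [CommRing K]
    [Algebra A K] [IsFractionRing A K] (h : associatedPrimes A A ⊆ minimalPrimes A) :
    IsArtinianRing K := by
  have : IsNoetherianRing K := IsLocalization.isNoetherianRing A⁰ K inferInstance
  have : IsFractionRing K K := IsFractionRing.idem A K
  have : Ring.KrullDimLE 0 K := by
    refine Ring.KrullDimLE.mk₀ fun I hI ↦ ?_
    obtain ⟨m, hm, hIm⟩ := Ideal.exists_le_maximal I hI.ne_top
    have hmin : m.comap (algebraMap A K) ∈ minimalPrimes A :=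
      h (comap_mem_associatedPrimes_of_mem_associatedPrimes_of_isLocalizedModule_of_fg A⁰
        (Algebra.linearMap A K) m (Ideal.IsMaximal.mem_associatedPrimes_of_isFractionRing K m)
        (IsNoetherian.noetherian _))
    have hmI : m.comap (algebraMap A K) ≤ I.comap (algebraMap A K) :=
      hmin.2 ⟨inferInstance, bot_le⟩ (Ideal.comap_mono hIm)
    have : m ≤ I := by
      rw [← IsLocalization.map_under A⁰ K m, ← IsLocalization.map_under A⁰ K I]
      exact Ideal.map_mono hmI
    rwa [le_antisymm hIm this]
  exact IsNoetherianRing.isArtinianRing_of_krullDimLE_zero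

theorem mem_of_forall_mem_associatedPrimes {I : Ideal A} {x : A}
    (h : ∀ (P : Ideal A) [P.IsPrime], P ∈ associatedPrimes A (A ⧸ I) →
      algebraMap A (Localization.AtPrime P) x ∈ I.map (algebraMap A (Localization.AtPrime P))) :
    x ∈ I := by
  by_contra hx
  obtain ⟨P, hP, hle⟩ := exists_le_isAssociatedPrime_of_isNoetherianRing A (Ideal.Quotient.mk I x)
    (mt Ideal.Quotient.eq_zero_iff_mem.mp hx)
  have : P.IsPrime := hP.isPrime
  obtain ⟨t, ht, htx⟩ := (IsLocalization.algebraMap_mem_map_algebraMap_iff P.primeCompl _ I x).mp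
    (h P hP)
  refine ht (hle ?_)
  rw [Submodule.mem_colon_singleton]
  exact Ideal.Quotient.eq_zero_iff_mem.mpr htx

end AssociatedPrimes

section Descent

open nonZeroDivisors

variable {A : Type*} [CommRing A]

/-- The homomorphism `Q(A) → Q(A')` of total rings of fractions induced by a localization
`A → A' = M⁻¹A`, along which elements of `Q(A)` are tested at the primes of `A`. It exists because
localization preserves non-zerodivisors, and it need not be injective. -/
noncomputable def fractionRingMap (A' : Type*) [CommRing A'] [Algebra A A'] (M : Submonoid A)
    [IsLocalization M A'] : FractionRing A →ₐ[A] FractionRing A' :=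
  IsLocalization.liftAlgHom (M := A⁰) (f := Algebra.ofId A (FractionRing A')) fun s ↦ by
    rw [Algebra.ofId_apply, IsScalarTower.algebraMap_apply A A']
    exact IsLocalization.map_units (FractionRing A')
      ⟨_, IsLocalization.map_nonZeroDivisors_le M A' ⟨s, s.2, rfl⟩⟩

theorem map_mem_strictClosureSet {A' : Type*} [CommRing A'] [Algebra A A']
    (φ : FractionRing A →ₐ[A] FractionRing A') {x : FractionRing A} (hx : x ∈ strictClosureSet A) :
    φ x ∈ strictClosureSet A' := by
  obtain ⟨hint, hx⟩ := hx
  let g : integralClosure A (FractionRing A) →ₐ[A] integralClosure A' (FractionRing A') :=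
    (φ.comp (integralClosure A (FractionRing A)).val).codRestrict
      ((integralClosure A' (FractionRing A')).restrictScalars A)
      fun y ↦ (y.2.map φ).tower_top
  exact ⟨(g ⟨x, hint⟩).2, sub_eq_zero.mp
    (includeLeftSubRight_map_eq_zero g (sub_eq_zero.mpr hx))⟩

theorem mem_range_algebraMap_of_forall_not_ringDepthGE_two [IsNoetherianRing A]
    {x : FractionRing A}
    (h : ∀ (P : Ideal A) [P.IsPrime], ¬ RingDepthGE (Localization.AtPrime P) 2 →
      fractionRingMap (Localization.AtPrime P) P.primeCompl x ∈
        Set.range (algebraMap (Localization.AtPrime P) (FractionRing (Localization.AtPrime P)))) :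
    x ∈ Set.range (algebraMap A (FractionRing A)) := by
  obtain ⟨b, s, rfl⟩ := IsLocalization.exists_mk'_eq A⁰ x
  suffices hb : b ∈ Ideal.span {(s : A)} by
    obtain ⟨a, rfl⟩ := Ideal.mem_span_singleton.mp hb
    exact ⟨a, (IsLocalization.mk'_mul_cancel_left a s).symm⟩
  refine mem_of_forall_mem_associatedPrimes fun P _ hP ↦ ?_
  obtain ⟨c, hc⟩ := h P (not_ringDepthGE_two_of_mem_associatedPrimes_quotient s.2 hP)
  rw [Ideal.map_span, Set.image_singleton, Ideal.mem_span_singleton]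
  refine ⟨c, IsFractionRing.injective _ (FractionRing (Localization.AtPrime P)) ?_⟩
  rw [map_mul, hc, ← IsScalarTower.algebraMap_apply, ← IsScalarTower.algebraMap_apply,
    ← AlgHom.commutes (fractionRingMap (Localization.AtPrime P) P.primeCompl),
    ← AlgHom.commutes (fractionRingMap (Localization.AtPrime P) P.primeCompl), ← map_mul,
    IsLocalization.mk'_spec']

theorem isStrictlyClosed_of_forall_not_ringDepthGE_two [IsNoetherianRing A]
    (h : ∀ (P : Ideal A) [P.IsPrime], ¬ RingDepthGE (Localization.AtPrime P) 2 →
      IsStrictlyClosed (Localization.AtPrime P)) :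
    IsStrictlyClosed A := fun _ hx ↦
  mem_range_algebraMap_of_forall_not_ringDepthGE_two fun P _ hP ↦
    h P hP _ (map_mem_strictClosureSet _ hx)

end Descent

/-- For a Noetherian ring `A` with `(S₁)`: `A` is strictly closed in `Ā` iff `A_P` is
strictly closed in the integral closure of `A_P` in `Q(A_P)` for every `P ∈ X₁(A)`. -/
theorem strictlyClosed_iff_forall_X1 (A : Type*) [CommRing A] [IsNoetherianRing A]
    (hS1 : SerreSCondition A 1) :
    IsStrictlyClosed A ↔
      ∀ (P : Ideal A) [P.IsPrime], ¬ RingDepthGE (Localization.AtPrime P) 2 →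
        IsStrictlyClosed (Localization.AtPrime P) := by
  have : IsArtinianRing (FractionRing A) :=
    isArtinianRing_of_associatedPrimes_subset_minimalPrimes _
      hS1.associatedPrimes_subset_minimalPrimes
  exact ⟨fun h P _ _ ↦ h.of_isLocalization _ (FractionRing A) P.primeCompl,
    isStrictlyClosed_of_forall_not_ringDepthGE_two⟩
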